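/- Let γ > 1 and let n ∈ ℕ with n ≥ 2, and let r_n ∈ [1, r*(γ)) be the unique value with k(r_n) = n. For every m ≥ 2 there exist a constant C_m > 0 and an open neighborhood U of r_n such that for every r ∈ U with r ≠ r_n (so that k(r) ∉ ℕ and the recursion is well-posed), the recursively defined Taylor coefficients satisfy |W_m| ≤ C_m·(1 + |k(r) − n|^{−⌊(m−2)/(n−1)⌋}) and |Z_m| ≤ C_m·(1 + |k(r) − n|^{−⌊(m−1)/(n−1)⌋}). In particular |W_m| stays bounded near r_n when m ≤ n, and |Z_m| stays bounded near r_n when m < n. -/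

import Mathlib

/-! The parameter `k(r)` is an eigenvalue ratio whose denominator is `-4 D_{Z,1}`, so
`k(r_n) = n ≠ 0` makes `D_{Z,1}` nonzero at `r_n`. Since `D_Z` vanishes at the sonic point,
`D_{W,0}` equals `α (W₀ - Z₀)`, which is positive because `(3 - γ) r < γ + 1` for `r < r*(γ)`.
All base quantities are continuous at `r_n`, hence the only singular factor of the recursion
near `r_n` is `(n - k(r))⁻¹`, which enters exactly once, in the formula for `Z_n`.

With `S = 1 + |k - n|⁻¹`, strong induction shows `W_m = O(S ^ ⌊(m-2)/(n-1)⌋)` and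
`Z_m = O(S ^ ⌊(m-1)/(n-1)⌋)`. The index sums occurring in the convolutions are controlled by
superadditivity of `x ↦ ⌊x/(n-1)⌋`; for `m = n` every term in the numerator of `Z_n` is bounded
and the factor `(n - k)⁻¹` contributes the single power of `S`. For the remaining `m` the factor
`(m - k)⁻¹` is bounded. Finally `S ^ e` is at most a constant times `1 + |k - n| ^ (-e)`.

At a parameter with `k(r) = n` the convention `0⁻¹ = 0` gives `|k - n|⁻¹ = 0` and `Z_n = 0`, which is
consistent with the same estimates, so injectivity of `k` is not needed. -/

noncomputable section

open Real Filter Set Topology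

namespace SelfSimilarImplosion

/-- `α = (γ−1)/2`. -/
def alphaF (γ : ℝ) : ℝ := (γ - 1) / 2

/-- `D_W(W,Z) = 1 + (1/2)(W + Z + α(W − Z))`. -/
def DW (γ W Z : ℝ) : ℝ := 1 + (1 / 2) * (W + Z + alphaF γ * (W - Z))

/-- `D_Z(W,Z) = 1 + (1/2)(W + Z − α(W − Z))`. -/
def DZ (γ W Z : ℝ) : ℝ := 1 + (1 / 2) * (W + Z - alphaF γ * (W - Z))

/-- `N_W(W,Z) = −(r + (1/2)((1+2α)W + (1−α)Z))·W + (α/2)Z²`. -/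
def NW (γ r W Z : ℝ) : ℝ :=
  -(r + (1 / 2) * ((1 + 2 * alphaF γ) * W + (1 - alphaF γ) * Z)) * W + (alphaF γ / 2) * Z ^ 2

/-- `N_Z(W,Z) = −(r + (1/2)((1−α)W + (1+2α)Z))·Z + (α/2)W²`. -/
def NZ (γ r W Z : ℝ) : ℝ :=
  -(r + (1 / 2) * ((1 - alphaF γ) * W + (1 + 2 * alphaF γ) * Z)) * Z + (alphaF γ / 2) * W ^ 2

/-- The critical self-similar exponent `r*(γ)`. -/
def rStar (γ : ℝ) : ℝ :=
  if γ < 5 / 3 then 1 + 2 / (Real.sqrt (2 / (γ - 1)) + 1) ^ 2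
  else (3 * γ - 1) / (2 + Real.sqrt 3 * (γ - 1))

/-- `ℛ₁`. -/
def R1 (γ r : ℝ) : ℝ :=
  Real.sqrt (γ ^ 2 * (r - 3) ^ 2 - 2 * γ * (3 * r ^ 2 - 6 * r + 7) + 9 * r ^ 2 - 14 * r + 9)

/-- First coordinate `W₀` of the sonic point `P_s`. -/
def W₀ (γ r : ℝ) : ℝ :=
  (γ ^ 2 * r + (γ + 1) * R1 γ r - 3 * γ ^ 2 - 2 * γ * r + 10 * γ - 3 * r - 3) / (4 * (γ - 1) ^ 2)

/-- Second coordinate `Z₀` of the sonic point `P_s`. -/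
def Z₀ (γ r : ℝ) : ℝ :=
  (γ ^ 2 * r + (γ - 3) * R1 γ r - 3 * γ ^ 2 - 6 * γ * r + 6 * γ + 9 * r - 7) / (4 * (γ - 1) ^ 2)

/-- `ℛ₂`. -/
def R2 (γ r : ℝ) : ℝ :=
  (1 / (γ - 1)) *
    Real.sqrt (γ * ((76 - 27 * γ) * γ - 71) - (3 * γ - 5) * ((γ - 5) * γ + 2) * r ^ 2
      + (γ * (γ * (18 * γ - 52) + 50) - 8) * r
      + R1 γ r * (9 * (γ - 2) * γ + ((2 - 3 * γ) * γ + 5) * r + 5) + 18)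

/-- The first Taylor coefficient `W₁`. -/
def W₁ (γ r : ℝ) : ℝ :=
  (γ * (-3 * (R1 γ r + 6) - 3 * γ * (r - 3) + 2 * r) + R1 γ r + 5 * r + 5) / (4 * (γ - 1) ^ 2)

/-- The first Taylor coefficient `Z₁`. -/
def Z₁ (γ r : ℝ) : ℝ :=
  (-(3 * γ ^ 3 - 7 * γ ^ 2 + γ + 11) * r
      + γ * (γ * (9 * γ - 3 * R1 γ r - 25) + 10 * R1 γ r - 4 * (γ - 1) * R2 γ r + 27)
      - 3 * R1 γ r + 4 * (γ - 1) * R2 γ r - 3)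
    / (4 * (γ - 1) ^ 2 * (γ + 1))

/-- The eigenvalue-ratio function `k(r)`. -/
def kFun (γ r : ℝ) : ℝ :=
  (-4 + (1 + γ) * (r - 1) / (γ - 1) - R2 γ r) / (-4 + (1 + γ) * (r - 1) / (γ - 1) + R2 γ r)


/-- The self-similar profile equation for a function `𝒲` of `ζ`. -/
def ProfileEqn (γ r : ℝ) (Wc : ℝ → ℝ) (ζ : ℝ) : Prop :=
  (r - 1) * Wc ζ
      + (ζ + (1 / 2) * (Wc ζ - Wc (-ζ) + alphaF γ * (Wc ζ + Wc (-ζ)))) * deriv Wc ζ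
      + (alphaF γ / (2 * ζ)) * ((Wc ζ) ^ 2 - (Wc (-ζ)) ^ 2) = 0

/-- `(W, Z)` solves the autonomous ODE system on the set `s`. -/
def IsOdeSolutionOn (γ r : ℝ) (W Z : ℝ → ℝ) (s : Set ℝ) : Prop :=
  ∀ ξ ∈ s,
    DW γ (W ξ) (Z ξ) * deriv W ξ = NW γ r (W ξ) (Z ξ) ∧
    DZ γ (W ξ) (Z ξ) * deriv Z ξ = NZ γ r (W ξ) (Z ξ)

/-- The `Z`-partial derivative of `N_Z` at `(W, Z)`. -/
def pZNZ (γ r W Z : ℝ) : ℝ :=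
  -(r + (1 / 2) * ((1 - alphaF γ) * W + (1 + 2 * alphaF γ) * Z)) - ((1 + 2 * alphaF γ) / 2) * Z

/-- `∂_W N_W(W,Z)`. -/
def gradNW1 (γ r W Z : ℝ) : ℝ := -r - (1 + 2 * alphaF γ) * W - ((1 - alphaF γ) / 2) * Z

/-- `∂_Z N_W(W,Z)`. -/
def gradNW2 (γ W Z : ℝ) : ℝ := -((1 - alphaF γ) / 2) * W + alphaF γ * Z

/-- `∂_W N_Z(W,Z)`. -/
def gradNZ1 (γ W Z : ℝ) : ℝ := alphaF γ * W - ((1 - alphaF γ) / 2) * Z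

/-- `∂_Z N_Z(W,Z)`. -/
def gradNZ2 (γ r W Z : ℝ) : ℝ := -r - ((1 - alphaF γ) / 2) * W - (1 + 2 * alphaF γ) * Z

/-- The quadratic form `(a,b)·HN_W·(c,d)ᵀ` of the constant Hessian of `N_W`. -/
def hessNW (γ a b c d : ℝ) : ℝ :=
  -(1 + 2 * alphaF γ) * a * c - ((1 - alphaF γ) / 2) * (a * d + b * c) + alphaF γ * b * d

/-- The quadratic form `(a,b)·HN_Z·(c,d)ᵀ` of the constant Hessian of `N_Z`. -/
def hessNZ (γ a b c d : ℝ) : ℝ :=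
  alphaF γ * a * c - ((1 - alphaF γ) / 2) * (a * d + b * c) - (1 + 2 * alphaF γ) * b * d

/-- `D_{W,m}` computed from the sequences `(W_m)`, `(Z_m)`. -/
def DWseq (γ : ℝ) (Ws Zs : ℕ → ℝ) : ℕ → ℝ
  | 0 => DW γ (Ws 0) (Zs 0)
  | m + 1 => ((1 + alphaF γ) / 2) * Ws (m + 1) + ((1 - alphaF γ) / 2) * Zs (m + 1)

/-- `D_{Z,m}` computed from the sequences `(W_m)`, `(Z_m)`. -/
def DZseq (γ : ℝ) (Ws Zs : ℕ → ℝ) : ℕ → ℝ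
  | 0 => DZ γ (Ws 0) (Zs 0)
  | m + 1 => ((1 - alphaF γ) / 2) * Ws (m + 1) + ((1 + alphaF γ) / 2) * Zs (m + 1)

/-- `N_{W,m}` computed from the sequences `(W_m)`, `(Z_m)`. -/
def NWseq (γ r : ℝ) (Ws Zs : ℕ → ℝ) : ℕ → ℝ
  | 0 => NW γ r (Ws 0) (Zs 0)
  | m + 1 =>
      gradNW1 γ r (Ws 0) (Zs 0) * Ws (m + 1) + gradNW2 γ (Ws 0) (Zs 0) * Zs (m + 1)
        + ∑ j ∈ Finset.Ico 1 (m + 1),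
            (Nat.choose m (j - 1) : ℝ) * hessNW γ (Ws (m + 1 - j)) (Zs (m + 1 - j)) (Ws j) (Zs j)

/-- `N_{Z,m}` computed from the sequences `(W_m)`, `(Z_m)`. -/
def NZseq (γ r : ℝ) (Ws Zs : ℕ → ℝ) : ℕ → ℝ
  | 0 => NZ γ r (Ws 0) (Zs 0)
  | m + 1 =>
      gradNZ1 γ (Ws 0) (Zs 0) * Ws (m + 1) + gradNZ2 γ r (Ws 0) (Zs 0) * Zs (m + 1)
        + ∑ j ∈ Finset.Ico 1 (m + 1),
            (Nat.choose m (j - 1) : ℝ) * hessNZ γ (Ws (m + 1 - j)) (Zs (m + 1 - j)) (Ws j) (Zs j)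

/-- The recursively defined Taylor coefficients `(W_m, Z_m)` of the smooth solution at the
sonic point `P_s`, following Proposition 2.2 (`eq:Wn`–`eq:Zn`). -/
def coeff (γ r : ℝ) : ℕ → ℝ × ℝ
  | 0 => (W₀ γ r, Z₀ γ r)
  | 1 => (W₁ γ r, Z₁ γ r)
  | m + 2 =>
      let pW : ℕ → ℝ := fun j => if _h : j < m + 2 then (coeff γ r j).1 else 0
      let pZ : ℕ → ℝ := fun j => if _h : j < m + 2 then (coeff γ r j).2 else 0
      let newW : ℝ :=
        (NWseq γ r pW pZ (m + 1)
            - ∑ j ∈ Finset.range (m + 1),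
                (Nat.choose (m + 1) j : ℝ) * DWseq γ pW pZ (m + 1 - j) * pW (j + 1))
          / DWseq γ pW pZ 0
      let newZ : ℝ :=
        (-(∑ j ∈ Finset.Ico 1 (m + 1),
              (Nat.choose (m + 2) j : ℝ) * DZseq γ pW pZ (m + 2 - j) * pZ (j + 1))
            + (gradNZ1 γ (pW 0) (pZ 0) * newW
                + ∑ j ∈ Finset.Ico 1 (m + 2),
                    (Nat.choose (m + 1) (j - 1) : ℝ)
                      * hessNZ γ (pW (m + 2 - j)) (pZ (m + 2 - j)) (pW j) (pZ j))
            - Z₁ γ r * newW * ((1 - alphaF γ) / 2))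
          / (DZseq γ pW pZ 1 * (((m : ℝ) + 2) - kFun γ r))
      (newW, newZ)
  termination_by n => n
  decreasing_by all_goals omega

/-! ### Nondegeneracy at the sonic point -/

/-- Below the critical exponent, the non-square-root part of `W₀ - Z₀` stays positive. -/
theorem rStar_bound {γ r : ℝ} (hγ : 1 < γ) (h1 : 1 ≤ r) (hr : r < rStar γ) :
    (3 - γ) * r < γ + 1 := by
  rcases le_or_gt 3 γ with h3 | h3
  · nlinarith
  unfold rStar at hr
  split_ifs at hr with h
  · have hx : 0 < 2 / (γ - 1) := div_pos two_pos (by linarith)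
    have hs := Real.sq_sqrt hx.le
    have hs0 := Real.sqrt_nonneg (2 / (γ - 1))
    have hle : 2 / (√(2 / (γ - 1)) + 1) ^ 2 ≤ γ - 1 := by
      rw [div_le_iff₀ (by positivity)]
      have h2 : (γ - 1) * (2 / (γ - 1)) = 2 := by
        field_simp [(by linarith : γ - 1 ≠ 0)]
      nlinarith
    nlinarith
  · have hs : (1 : ℝ) ≤ √3 := by
      rw [Real.le_sqrt (by norm_num) (by norm_num)]; norm_num
    have hd : 0 < 2 + √3 * (γ - 1) := by nlinarith
    rw [lt_div_iff₀ hd] at hr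
    have h2 : (3 - γ) * (3 * γ - 1) < (γ + 1) * (2 + √3 * (γ - 1)) := by
      nlinarith [mul_nonneg (sub_nonneg.2 hs) (by nlinarith : 0 ≤ (γ + 1) * (γ - 1)),
        mul_pos (sub_pos.2 hγ) (sub_pos.2 hγ)]
    have h4 : (3 - γ) * (r * (2 + √3 * (γ - 1))) < (3 - γ) * (3 * γ - 1) :=
      mul_lt_mul_of_pos_left hr (by linarith)
    refine lt_of_mul_lt_mul_right ?_ hd.le
    linarith

/-- `D_{W,0} ≠ 0`: at the sonic point `D_W = α (W₀ - Z₀)`. -/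
theorem DW_sonic_ne {γ r : ℝ} (hγ : 1 < γ) (h1 : 1 ≤ r) (hr : r < rStar γ) :
    DW γ (W₀ γ r) (Z₀ γ r) ≠ 0 := by
  have hg : γ - 1 ≠ 0 := by linarith
  have hb := rStar_bound hγ h1 hr
  have hR : 0 ≤ R1 γ r := Real.sqrt_nonneg _
  have : DW γ (W₀ γ r) (Z₀ γ r)
      = (R1 γ r + γ + 1 + (γ - 3) * r) / (2 * (γ - 1)) := by
    unfold DW W₀ Z₀ alphaF
    generalize R1 γ r = x
    field_simp
    ring
  rw [this]
  exact (div_pos (by linarith) (by linarith)).ne'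

/-- `-4 D_{Z,1}` is the denominator of `k(r)`. -/
theorem DZ1_eq {γ : ℝ} (r : ℝ) (hγ : 1 < γ) :
    ((1 - alphaF γ) / 2) * W₁ γ r + ((1 + alphaF γ) / 2) * Z₁ γ r
      = -(-4 + (1 + γ) * (r - 1) / (γ - 1) + R2 γ r) / 4 := by
  have hg : γ - 1 ≠ 0 := by linarith
  have hg' : γ + 1 ≠ 0 := by linarith
  unfold W₁ Z₁ alphaF
  generalize R1 γ r = x
  generalize R2 γ r = y
  field_simp
  ring

theorem kFun_den_ne {γ r : ℝ} (h : kFun γ r ≠ 0) :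
    -4 + (1 + γ) * (r - 1) / (γ - 1) + R2 γ r ≠ 0 := fun h0 => h (by rw [kFun, h0, div_zero])

/-! ### Continuity of the base quantities -/

theorem continuous_R1 (γ : ℝ) : Continuous (R1 γ) := by unfold R1; fun_prop

theorem continuous_R2 (γ : ℝ) : Continuous (R2 γ) := by
  have := continuous_R1 γ
  unfold R2; fun_prop

theorem continuous_W₀ (γ : ℝ) : Continuous (W₀ γ) := by
  have := continuous_R1 γ
  unfold W₀; fun_prop

theorem continuous_Z₀ (γ : ℝ) : Continuous (Z₀ γ) := by
  have := continuous_R1 γ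
  unfold Z₀; fun_prop

theorem continuous_W₁ (γ : ℝ) : Continuous (W₁ γ) := by
  have := continuous_R1 γ
  unfold W₁; fun_prop

theorem continuous_Z₁ (γ : ℝ) : Continuous (Z₁ γ) := by
  have := continuous_R1 γ
  have := continuous_R2 γ
  unfold Z₁; fun_prop

theorem continuousAt_kFun {γ r : ℝ} (h : kFun γ r ≠ 0) : ContinuousAt (kFun γ) r := by
  have := continuous_R2 γ
  unfold kFun
  exact ContinuousAt.div (by fun_prop) (by fun_prop) (kFun_den_ne h)

/-! ### Orders of growth -/

/-- `f` is of order at most `S ^ e` along the filter `l`. -/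
def Ord (l : Filter ℝ) (S : ℝ → ℝ) (e : ℕ) (f : ℝ → ℝ) : Prop := f =O[l] fun r => S r ^ e

namespace Ord

variable {l : Filter ℝ} {S f g : ℝ → ℝ} {d e : ℕ}

theorem mono (hS : ∀ r, 1 ≤ S r) (h : Ord l S d f) (hde : d ≤ e) : Ord l S e f :=
  h.trans <| Asymptotics.IsBigO.of_bound 1 <| Eventually.of_forall fun r => by
    have h0 : 0 ≤ S r := zero_le_one.trans (hS r)
    rw [Real.norm_of_nonneg (pow_nonneg h0 _), Real.norm_of_nonneg (pow_nonneg h0 _), one_mul]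
    exact pow_le_pow_right₀ (hS r) hde

theorem add (hf : Ord l S e f) (hg : Ord l S e g) : Ord l S e fun r => f r + g r :=
  Asymptotics.IsBigO.add hf hg

theorem sub (hf : Ord l S e f) (hg : Ord l S e g) : Ord l S e fun r => f r - g r :=
  Asymptotics.IsBigO.sub hf hg

theorem neg (hf : Ord l S e f) : Ord l S e fun r => - f r :=
  Asymptotics.IsBigO.neg_left hf

theorem mul (hf : Ord l S d f) (hg : Ord l S e g) : Ord l S (d + e) fun r => f r * g r := by
  have := Asymptotics.IsBigO.mul hf hg
  simpa only [Ord, pow_add] using this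

theorem const_mul (c : ℝ) (hf : Ord l S e f) : Ord l S e fun r => c * f r :=
  Asymptotics.IsBigO.const_mul_left hf c

theorem sum {s : Finset ℕ} {F : ℕ → ℝ → ℝ} (h : ∀ j ∈ s, Ord l S e (F j)) :
    Ord l S e fun r => ∑ j ∈ s, F j r := by
  have := Asymptotics.IsBigO.sum h
  rwa [Finset.sum_fn] at this

theorem zero : Ord l S e fun _ => 0 := Asymptotics.isBigO_zero _ _

theorem of_continuousAt {r₀ : ℝ} (h : ContinuousAt f r₀) : Ord (𝓝 r₀) S 0 f := by
  simpa only [Ord, pow_zero] using h.norm.isBoundedUnder_le.isBigO_one ℝ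

theorem mul_bdd (hf : Ord l S 0 f) (hg : Ord l S e g) : Ord l S e fun r => f r * g r := by
  simpa using hf.mul hg

end Ord

section Convolution

variable {l : Filter ℝ} {S : ℝ → ℝ} {w z : ℕ → ℝ → ℝ} {b : ℕ → ℕ} {γ : ℝ}

theorem ord_DWseq (hw : ∀ j, Ord l S (b j) (w j)) (hz : ∀ j, Ord l S (b j) (z j)) {j : ℕ}
    (hj : 1 ≤ j) :
    Ord l S (b j) fun r => DWseq γ (fun i => w i r) (fun i => z i r) j := by
  obtain ⟨i, rfl⟩ := Nat.exists_eq_add_of_le' hj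
  exact ((hw _).const_mul _).add ((hz _).const_mul _)

theorem ord_DZseq (hw : ∀ j, Ord l S (b j) (w j)) (hz : ∀ j, Ord l S (b j) (z j)) {j : ℕ}
    (hj : 1 ≤ j) :
    Ord l S (b j) fun r => DZseq γ (fun i => w i r) (fun i => z i r) j := by
  obtain ⟨i, rfl⟩ := Nat.exists_eq_add_of_le' hj
  exact ((hw _).const_mul _).add ((hz _).const_mul _)

/-- A symmetric bilinear form in the pairs with indices `i` and `j` has order `b i + b j`. -/
theorem ord_bilin (hw : ∀ j, Ord l S (b j) (w j)) (hz : ∀ j, Ord l S (b j) (z j))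
    (A B D : ℝ) (i j : ℕ) :
    Ord l S (b i + b j) fun r => A * w i r * w j r - B * (w i r * z j r + z i r * w j r)
      + D * z i r * z j r := by
  simp only [mul_assoc]
  exact ((((hw i).mul (hw j)).const_mul A).sub
    ((((hw i).mul (hz j)).add ((hz i).mul (hw j))).const_mul B)).add
      (((hz i).mul (hz j)).const_mul D)

theorem ord_hessNW (hw : ∀ j, Ord l S (b j) (w j)) (hz : ∀ j, Ord l S (b j) (z j)) (i j : ℕ) :
    Ord l S (b i + b j) fun r => hessNW γ (w i r) (z i r) (w j r) (z j r) :=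
  ord_bilin hw hz (-(1 + 2 * alphaF γ)) ((1 - alphaF γ) / 2) (alphaF γ) i j

theorem ord_hessNZ (hw : ∀ j, Ord l S (b j) (w j)) (hz : ∀ j, Ord l S (b j) (z j)) (i j : ℕ) :
    Ord l S (b i + b j) fun r => hessNZ γ (w i r) (z i r) (w j r) (z j r) := by
  have := ord_bilin hw hz (alphaF γ) ((1 - alphaF γ) / 2) (-(1 + 2 * alphaF γ)) i j
  simpa only [hessNZ, sub_eq_add_neg, neg_mul] using this

end Convolution

/-! ### The induction -/

/-- The truncation of the coefficient sequence used in the recursion at step `m`; the unknown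
entries are replaced by zero. -/
def truncW (γ : ℝ) (m j : ℕ) (r : ℝ) : ℝ := if j < m then (coeff γ r j).1 else 0

/-- The analogue of `truncW` for the second component. -/
def truncZ (γ : ℝ) (m j : ℕ) (r : ℝ) : ℝ := if j < m then (coeff γ r j).2 else 0

theorem coeff_fst (γ r : ℝ) (m : ℕ) :
    (coeff γ r (m + 2)).1 =
      (NWseq γ r (fun j => truncW γ (m + 2) j r) (fun j => truncZ γ (m + 2) j r) (m + 1)
        - ∑ j ∈ Finset.range (m + 1), (Nat.choose (m + 1) j : ℝ)
            * DWseq γ (fun j => truncW γ (m + 2) j r) (fun j => truncZ γ (m + 2) j r) (m + 1 - j)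
            * truncW γ (m + 2) (j + 1) r)
        * (DW γ (W₀ γ r) (Z₀ γ r))⁻¹ := by
  rw [coeff]
  simp only [← div_eq_mul_inv, truncW, truncZ, dite_eq_ite]
  congr 1
  simp [DWseq, coeff]

theorem coeff_snd (γ r : ℝ) (m : ℕ) :
    (coeff γ r (m + 2)).2 =
      (-(∑ j ∈ Finset.Ico 1 (m + 1), (Nat.choose (m + 2) j : ℝ)
            * DZseq γ (fun j => truncW γ (m + 2) j r) (fun j => truncZ γ (m + 2) j r) (m + 2 - j)
            * truncZ γ (m + 2) (j + 1) r)
          + (gradNZ1 γ (W₀ γ r) (Z₀ γ r) * (coeff γ r (m + 2)).1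
            + ∑ j ∈ Finset.Ico 1 (m + 2), (Nat.choose (m + 1) (j - 1) : ℝ)
                * hessNZ γ (truncW γ (m + 2) (m + 2 - j) r) (truncZ γ (m + 2) (m + 2 - j) r)
                    (truncW γ (m + 2) j r) (truncZ γ (m + 2) j r))
          - Z₁ γ r * (coeff γ r (m + 2)).1 * ((1 - alphaF γ) / 2))
        * ((((1 - alphaF γ) / 2) * W₁ γ r + ((1 + alphaF γ) / 2) * Z₁ γ r)⁻¹
          * ((((m + 2 : ℕ) : ℝ) - kFun γ r)⁻¹)) := by
  rw [← mul_inv, ← div_eq_mul_inv, coeff]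
  simp only [truncW, truncZ, dite_eq_ite]
  simp [DZseq, coeff]

/-- Order of `W_{m+2}`, given the orders of all lower coefficients. The sharper exponent
`⌊(j-2)/p⌋` for `W_j` is needed only against `D_{W,m+1-j}`; elsewhere `⌊(j-1)/p⌋` suffices. -/
theorem ord_fst {γ r₀ : ℝ} {S : ℝ → ℝ} (hS : ∀ r, 1 ≤ S r) {p : ℕ} (m : ℕ)
    (hD : DW γ (W₀ γ r₀) (Z₀ γ r₀) ≠ 0)
    (ha : ∀ j, Ord (𝓝 r₀) S ((j - 2) / p) (truncW γ (m + 2) j))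
    (hz : ∀ j, Ord (𝓝 r₀) S ((j - 1) / p) (truncZ γ (m + 2) j)) :
    Ord (𝓝 r₀) S (m / p) fun r => (coeff γ r (m + 2)).1 := by
  have hw : ∀ j, Ord (𝓝 r₀) S ((j - 1) / p) (truncW γ (m + 2) j) := fun j =>
    (ha j).mono hS (Nat.div_le_div_right (by omega))
  have cW := continuous_W₀ γ
  have cZ := continuous_Z₀ γ
  have hDi : Ord (𝓝 r₀) S 0 fun r => (DW γ (W₀ γ r) (Z₀ γ r))⁻¹ := by
    refine Ord.of_continuousAt (ContinuousAt.inv₀ ?_ hD)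
    unfold DW; fun_prop
  simp only [coeff_fst]
  refine Ord.mul (d := m / p) (e := 0) ?_ hDi
  have e0 : ∀ r, truncW γ (m + 2) 0 r = W₀ γ r := fun r => by simp [truncW, coeff]
  have e0' : ∀ r, truncZ γ (m + 2) 0 r = Z₀ γ r := fun r => by simp [truncZ, coeff]
  refine Ord.sub ?_ (Ord.sum fun j hj => ?_)
  · simp only [NWseq, e0, e0']
    refine Ord.add (Ord.add ?_ ?_) (Ord.sum fun j hj => ?_)
    · refine Ord.mul_bdd (Ord.of_continuousAt ?_) (hw (m + 1))
      unfold gradNW1; fun_prop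
    · refine Ord.mul_bdd (Ord.of_continuousAt ?_) (hz (m + 1))
      unfold gradNW2; fun_prop
    · rw [Finset.mem_Ico] at hj
      refine Ord.const_mul _ ((ord_hessNW hw hz _ _).mono hS ?_)
      exact Nat.div_add_div_le_add_div.trans (Nat.div_le_div_right (by omega))
  · rw [Finset.mem_range] at hj
    simp only [mul_assoc]
    refine Ord.const_mul _ (((ord_DWseq hw hz (by omega)).mul (ha (j + 1))).mono hS ?_)
    exact Nat.div_add_div_le_add_div.trans (Nat.div_le_div_right (by omega))

/-- Order of the numerator of `Z_{m+2}`. Every convolution index `i` occurring in it satisfies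
`i - 1 ≤ m`, so that the exponent `c` may be `0` as long as `m < p`. -/
theorem ord_numer {γ r₀ : ℝ} {S : ℝ → ℝ} (hS : ∀ r, 1 ≤ S r) {p c : ℕ} (m : ℕ)
    (hc : ∀ x y, x ≤ m → y ≤ m → x + y ≤ m + 1 → x / p + y / p ≤ c)
    (hw : ∀ j, Ord (𝓝 r₀) S ((j - 1) / p) (truncW γ (m + 2) j))
    (hz : ∀ j, Ord (𝓝 r₀) S ((j - 1) / p) (truncZ γ (m + 2) j))
    (hW : Ord (𝓝 r₀) S (m / p) fun r => (coeff γ r (m + 2)).1) :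
    Ord (𝓝 r₀) S c fun r =>
      -(∑ j ∈ Finset.Ico 1 (m + 1), (Nat.choose (m + 2) j : ℝ)
            * DZseq γ (fun j => truncW γ (m + 2) j r) (fun j => truncZ γ (m + 2) j r) (m + 2 - j)
            * truncZ γ (m + 2) (j + 1) r)
          + (gradNZ1 γ (W₀ γ r) (Z₀ γ r) * (coeff γ r (m + 2)).1
            + ∑ j ∈ Finset.Ico 1 (m + 2), (Nat.choose (m + 1) (j - 1) : ℝ)
                * hessNZ γ (truncW γ (m + 2) (m + 2 - j) r) (truncZ γ (m + 2) (m + 2 - j) r)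
                    (truncW γ (m + 2) j r) (truncZ γ (m + 2) j r))
          - Z₁ γ r * (coeff γ r (m + 2)).1 * ((1 - alphaF γ) / 2) := by
  have cW := continuous_W₀ γ
  have cZ := continuous_Z₀ γ
  have hW' : Ord (𝓝 r₀) S c fun r => (coeff γ r (m + 2)).1 :=
    hW.mono hS (by simpa using hc m 0 le_rfl (by omega) (by omega))
  refine Ord.sub (Ord.add (Ord.neg (Ord.sum fun j hj => ?_))
    (Ord.add ?_ (Ord.sum fun j hj => ?_))) ?_
  · rw [Finset.mem_Ico] at hj
    simp only [mul_assoc]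
    refine Ord.const_mul _ (((ord_DZseq hw hz (by omega)).mul (hz (j + 1))).mono hS ?_)
    exact hc _ _ (by omega) (by omega) (by omega)
  · refine Ord.mul_bdd (Ord.of_continuousAt ?_) hW'
    unfold gradNZ1; fun_prop
  · rw [Finset.mem_Ico] at hj
    refine Ord.const_mul _ ((ord_hessNZ hw hz _ _).mono hS ?_)
    exact hc _ _ (by omega) (by omega) (by omega)
  · simp only [mul_comm _ ((1 - alphaF γ) / 2)]
    exact ((Ord.of_continuousAt (continuous_Z₁ γ).continuousAt).mul_bdd hW').const_mul _

/-- The growth rates of all coefficients near `r_n`, in terms of `S = 1 + |k - n|⁻¹`. -/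
theorem ord_coeff {γ : ℝ} (hγ : 1 < γ) {n : ℕ} (hn : 2 ≤ n) {rn : ℝ}
    (hrn : rn ∈ Set.Ico 1 (rStar γ)) (hkn : kFun γ rn = (n : ℝ)) (m : ℕ) :
    Ord (𝓝 rn) (fun r => 1 + |kFun γ r - n|⁻¹) ((m - 2) / (n - 1)) (fun r => (coeff γ r m).1) ∧
    Ord (𝓝 rn) (fun r => 1 + |kFun γ r - n|⁻¹) ((m - 1) / (n - 1)) (fun r => (coeff γ r m).2) := by
  set S : ℝ → ℝ := fun r => 1 + |kFun γ r - n|⁻¹ with hSdef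
  have hS : ∀ r, 1 ≤ S r := fun r => by simp [S]
  have hk0 : kFun γ rn ≠ 0 := by rw [hkn]; positivity
  have hk := continuousAt_kFun hk0
  induction m using Nat.strong_induction_on with
  | _ m ih =>
  match m, ih with
  | 0, _ =>
    simp only [coeff, Nat.zero_sub, Nat.zero_div]
    exact ⟨Ord.of_continuousAt (continuous_W₀ γ).continuousAt,
      Ord.of_continuousAt (continuous_Z₀ γ).continuousAt⟩
  | 1, _ =>
    simp only [coeff, Nat.sub_self, Nat.zero_div, Nat.reduceSub]
    exact ⟨Ord.of_continuousAt (continuous_W₁ γ).continuousAt,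
      Ord.of_continuousAt (continuous_Z₁ γ).continuousAt⟩
  | m + 2, ih =>
    have ha : ∀ j, Ord (𝓝 rn) S ((j - 2) / (n - 1)) (truncW γ (m + 2) j) := fun j => by
      unfold truncW
      split_ifs with h
      exacts [(ih j h).1, Ord.zero]
    have hz : ∀ j, Ord (𝓝 rn) S ((j - 1) / (n - 1)) (truncZ γ (m + 2) j) := fun j => by
      unfold truncZ
      split_ifs with h
      exacts [(ih j h).2, Ord.zero]
    have hw : ∀ j, Ord (𝓝 rn) S ((j - 1) / (n - 1)) (truncW γ (m + 2) j) := fun j =>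
      (ha j).mono hS (Nat.div_le_div_right (by omega))
    have hW := ord_fst hS m (DW_sonic_ne hγ hrn.1 hrn.2) ha hz
    refine ⟨hW, ?_⟩
    have hDZ : Ord (𝓝 rn) S 0
        fun r => (((1 - alphaF γ) / 2) * W₁ γ r + ((1 + alphaF γ) / 2) * Z₁ γ r)⁻¹ := by
      have cW := continuous_W₁ γ
      have cZ := continuous_Z₁ γ
      refine Ord.of_continuousAt (ContinuousAt.inv₀ (by fun_prop) ?_)
      rw [DZ1_eq rn hγ]
      have := kFun_den_ne hk0
      exact div_ne_zero (neg_ne_zero.2 this) (by norm_num)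
    simp only [coeff_snd]
    by_cases hmn : m + 2 = n
    · -- the resonant index: bounded numerator, one factor `(n - k)⁻¹`
      have hp : (m + 2 - 1) / (n - 1) = 0 + (0 + 1) := by
        rw [hmn]; simpa using Nat.div_self (by omega : 0 < n - 1)
      rw [hp]
      refine Ord.mul (ord_numer hS m (fun x y hx hy _ => ?_) hw hz hW) (Ord.mul hDZ ?_)
      · rw [Nat.div_eq_of_lt (by omega), Nat.div_eq_of_lt (by omega)]
      · rw [hmn]
        refine Asymptotics.IsBigO.of_bound 1 (Eventually.of_forall fun r => ?_)
        rw [Real.norm_of_nonneg (pow_nonneg (zero_le_one.trans (hS r)) _), Real.norm_eq_abs,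
          abs_inv, abs_sub_comm]
        simp [S]
    · have hki : Ord (𝓝 rn) S 0 fun r => (((m + 2 : ℕ) : ℝ) - kFun γ r)⁻¹ := by
        refine Ord.of_continuousAt (ContinuousAt.inv₀ (by fun_prop) ?_)
        rw [hkn, sub_ne_zero]
        exact_mod_cast hmn
      refine Ord.mul (e := 0) (ord_numer hS m (fun x y _ _ h => ?_) hw hz hW) (Ord.mul hDZ hki)
      exact Nat.div_add_div_le_add_div.trans (Nat.div_le_div_right (by omega))

/-- Back from `(1 + t⁻¹) ^ e` to `1 + t ^ (-e)`, at the price of the constant `2 ^ e`. -/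
theorem one_add_inv_pow_le (t : ℝ) (ht : 0 ≤ t) (e : ℕ) :
    (1 + t⁻¹) ^ e ≤ 2 ^ e * (1 + t ^ (-(e : ℤ))) := by
  have h := add_pow_le (zero_le_one' ℝ) (inv_nonneg.2 ht) e
  rw [one_pow, inv_pow] at h
  rw [zpow_neg, zpow_natCast]
  refine h.trans (mul_le_mul_of_nonneg_right ?_ (by positivity))
  exact pow_le_pow_right₀ one_le_two (by omega)

theorem Ord.exists_bound {γ rn : ℝ} {n e : ℕ} {f : ℝ → ℝ}
    (h : Ord (𝓝 rn) (fun r => 1 + |kFun γ r - n|⁻¹) e f) :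
    ∃ C : ℝ, ∀ᶠ r in 𝓝 rn, |f r| ≤ C * (1 + |kFun γ r - (n : ℝ)| ^ (-(e : ℤ))) := by
  obtain ⟨c, hc, hb⟩ := Asymptotics.IsBigO.exists_pos h
  refine ⟨c * 2 ^ e, hb.bound.mono fun r hr => hr.trans ?_⟩
  rw [Real.norm_of_nonneg (by positivity), mul_assoc]
  exact mul_le_mul_of_nonneg_left (one_add_inv_pow_le _ (abs_nonneg _) e) hc.le

/-- Corollary 2.4: asymptotics of the Taylor coefficients for `r` in a
neighborhood of `r_n`, the unique parameter with `k(r_n) = n`: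
`|W_m| ≲ 1 + |k−n|^{−⌊(m−2)/(n−1)⌋}` and `|Z_m| ≲ 1 + |k−n|^{−⌊(m−1)/(n−1)⌋}`. -/
theorem statement7 (γ : ℝ) (hγ : 1 < γ) (n : ℕ) (hn : 2 ≤ n) (rn : ℝ)
    (hrn : rn ∈ Set.Ico 1 (rStar γ)) (hkn : kFun γ rn = (n : ℝ)) :
    ∀ m : ℕ, 2 ≤ m →
      ∃ C : ℝ, 0 < C ∧ ∃ U : Set ℝ, IsOpen U ∧ rn ∈ U ∧
        ∀ r ∈ U, r ≠ rn →
          |(coeff γ r m).1| ≤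
            C * (1 + |kFun γ r - (n : ℝ)| ^ (-(((m - 2) / (n - 1) : ℕ) : ℤ))) ∧
          |(coeff γ r m).2| ≤
            C * (1 + |kFun γ r - (n : ℝ)| ^ (-(((m - 1) / (n - 1) : ℕ) : ℤ))) := by
  intro m _
  obtain ⟨h1, h2⟩ := ord_coeff hγ hn hrn hkn m
  obtain ⟨C₁, hC₁⟩ := h1.exists_bound
  obtain ⟨C₂, hC₂⟩ := h2.exists_bound
  obtain ⟨U, hU, hUo, hmem⟩ := eventually_nhds_iff.1 (hC₁.and hC₂)
  refine ⟨max 1 (max C₁ C₂), by positivity, U, hUo, hmem, fun r hr _ => ?_⟩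
  exact ⟨(hU r hr).1.trans (mul_le_mul_of_nonneg_right (by simp) (by positivity)),
    (hU r hr).2.trans (mul_le_mul_of_nonneg_right (by simp) (by positivity))⟩

end SelfSimilarImplosion
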